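/- For every t > 0 and every Schwartz function φ on ℝ, the Fourier transform of U(t)φ is given by (U(t)φ)^(ξ) = e^{i t ξ³/3} φ̂(ξ) for all ξ ∈ ℝ. Consequently, U(t) extends to an isometry of L²(ℝ). -/

import Mathlib

open MeasureTheory Filter Real Set
open scoped ENNReal Topology

/-- The Airy function, defined by the improper integral
`Ai z = (1/π) ∫₀^∞ cos (ξ³/3 + ξ z) dξ` (as a limit of integrals over `[0, R]`). -/
noncomputable def Ai (z : ℝ) : ℝ :=
  limUnder atTop (fun R : ℝ => (1 / π) * ∫ ξ in (0:ℝ)..R, Real.cos (ξ ^ 3 / 3 + ξ * z))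

/-- The linear KdV (Airy) group: `(U t φ) x = t^{-1/3} ∫ Ai ((x-y)/t^{1/3}) φ(y) dy`. -/
noncomputable def U (t : ℝ) (φ : ℝ → ℂ) : ℝ → ℂ :=
  fun x => (t ^ (1/3 : ℝ))⁻¹ • ∫ y : ℝ, (Ai ((x - y) / t ^ (1/3 : ℝ)) : ℂ) * φ y

/-- `(U (-t) φ) x = t^{-1/3} ∫ Ai ((y-x)/t^{1/3}) φ(y) dy` for `t > 0`. -/
noncomputable def Uneg (t : ℝ) (φ : ℝ → ℂ) : ℝ → ℂ :=
  fun x => (t ^ (1/3 : ℝ))⁻¹ • ∫ y : ℝ, (Ai ((y - x) / t ^ (1/3 : ℝ)) : ℂ) * φ y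
/-- The Fourier transform normalized by `f̂(ξ) = ∫ e^{-ixξ} f(x) dx`. -/
noncomputable def FT (f : ℝ → ℂ) (ξ : ℝ) : ℂ :=
  ∫ x : ℝ, Complex.exp (-(Complex.I * x * ξ)) * f x

/-!
On the Fourier side the kernel `t^{-1/3} Ai(x / t^{1/3})` of `U t` is the limit of the truncated
inverse transforms `∫_{-R}^{R} e^{2πiwx} m(w) dw` of the cubic phase `m(w) = e^{it(2πw)³/3}`. For a
truncated kernel Fubini turns convolution with `φ` into `∫_{-R}^{R} e^{2πiwx} m(w) 𝓕φ(w) dw`, which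
converges to the Fourier multiplier applied to `φ`. To let `R → ∞` in the convolution one needs the
truncated kernels to converge pointwise and to grow at most linearly in `x`, uniformly in `R`. Both
come from integrating `e^{ip}`, `p = ξ³/3 + ξz`, by parts against the weight `1 / (1 + ξ²)`, which
inverts `p' = ξ² + z` up to an error that is again integrable. The multiplier formula is then
Fourier inversion on Schwartz functions, and the isometry is Plancherel, since the phase is
unimodular.
-/

open scoped FourierTransform SchwartzMap

section OscillatoryIntegral

variable {p g : ℝ → ℝ}

/-- The remainder `(1 - g p' + i g') e^{ip}` left when `e^{ip}` is integrated by parts against the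
weight `g`. It is small where `g` is slowly varying and close to `1 / p'`; unlike `1 / p'`, `g` may
be smooth across the stationary points of `p`. -/
noncomputable def phaseRemainder (p g : ℝ → ℝ) (x : ℝ) : ℂ :=
  (1 - g x * (deriv p x : ℝ) + Complex.I * (deriv g x : ℝ)) * Complex.exp (p x * Complex.I)

lemma measurable_phaseRemainder (hp : Measurable p) (hg : Measurable g) :
    Measurable (phaseRemainder p g) := by
  have := measurable_deriv p
  have := measurable_deriv g
  unfold phaseRemainder
  fun_prop

lemma norm_phaseRemainder_le (p g : ℝ → ℝ) (x : ℝ) :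
    ‖phaseRemainder p g x‖ ≤ |1 - g x * deriv p x| + |deriv g x| := by
  rw [phaseRemainder, norm_mul, Complex.norm_exp_ofReal_mul_I, mul_one]
  refine (norm_add_le _ _).trans_eq ?_
  rw [norm_mul, Complex.norm_I, one_mul, Complex.norm_real, Real.norm_eq_abs]
  norm_cast

lemma hasDerivAt_weight_mul_cexp {x : ℝ} (hp : DifferentiableAt ℝ p x)
    (hg : DifferentiableAt ℝ g x) :
    HasDerivAt (fun y ↦ -Complex.I * (g y * Complex.exp (p y * Complex.I)))
      (Complex.exp (p x * Complex.I) - phaseRemainder p g x) x := by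
  have hexp := (hp.hasDerivAt.ofReal_comp.mul_const Complex.I).cexp
  refine ((hg.hasDerivAt.ofReal_comp.mul hexp).const_mul (-Complex.I)).congr_deriv ?_
  rw [phaseRemainder]
  linear_combination
    -(g x * (deriv p x : ℝ) * Complex.exp (p x * Complex.I)) * Complex.I_mul_I

lemma integral_cexp_phase_eq (hp : Differentiable ℝ p) (hg : Differentiable ℝ g)
    (hr : Integrable (phaseRemainder p g)) (a b : ℝ) :
    ∫ x in a..b, Complex.exp (p x * Complex.I) =
      -Complex.I * (g b * Complex.exp (p b * Complex.I))
        - -Complex.I * (g a * Complex.exp (p a * Complex.I))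
        + ∫ x in a..b, phaseRemainder p g x := by
  have hexp : IntervalIntegrable (fun x ↦ Complex.exp (p x * Complex.I)) volume a b := by
    have := hp.continuous
    exact Continuous.intervalIntegrable (by fun_prop) a b
  rw [← sub_eq_iff_eq_add, ← intervalIntegral.integral_sub hexp hr.intervalIntegrable]
  exact intervalIntegral.integral_eq_sub_of_hasDerivAt
    (fun x _ ↦ hasDerivAt_weight_mul_cexp (hp x) (hg x)) (hexp.sub hr.intervalIntegrable)

lemma norm_integral_cexp_phase_le (hp : Differentiable ℝ p) (hg : Differentiable ℝ g)
    (hr : Integrable (phaseRemainder p g)) (a b : ℝ) :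
    ‖∫ x in a..b, Complex.exp (p x * Complex.I)‖ ≤
      |g b| + |g a| + ∫ x, ‖phaseRemainder p g x‖ := by
  have hboundary (x : ℝ) : ‖-Complex.I * (g x * Complex.exp (p x * Complex.I))‖ = |g x| := by
    simp [Complex.norm_exp_ofReal_mul_I]
  have hremainder : ‖∫ x in a..b, phaseRemainder p g x‖ ≤ ∫ x, ‖phaseRemainder p g x‖ :=
    intervalIntegral.norm_integral_le_integral_norm_uIoc.trans
      (setIntegral_le_integral hr.norm (ae_of_all _ fun _ ↦ norm_nonneg _))
  rw [integral_cexp_phase_eq hp hg hr, ← hboundary a, ← hboundary b]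
  exact (norm_add_le _ _).trans (add_le_add (norm_sub_le _ _) hremainder)

lemma tendsto_integral_cexp_phase (hp : Differentiable ℝ p) (hg : Differentiable ℝ g)
    (hr : Integrable (phaseRemainder p g)) (hg₀ : Tendsto g (cocompact ℝ) (𝓝 0))
    {ι : Type*} {l : Filter ι} [l.IsCountablyGenerated] {a b : ι → ℝ}
    (ha : Tendsto a l atBot) (hb : Tendsto b l atTop) :
    Tendsto (fun i ↦ ∫ x in a i..b i, Complex.exp (p x * Complex.I)) l
      (𝓝 (∫ x, phaseRemainder p g x)) := by
  have hboundary : Tendsto (fun x ↦ -Complex.I * (g x * Complex.exp (p x * Complex.I)))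
      (cocompact ℝ) (𝓝 0) :=
    squeeze_zero_norm (fun x ↦ by simp [Complex.norm_exp_ofReal_mul_I])
      (tendsto_zero_iff_abs_tendsto_zero g |>.1 hg₀)
  have hsum := ((hboundary.comp (hb.mono_right atTop_le_cocompact)).sub
    (hboundary.comp (ha.mono_right atBot_le_cocompact))).add
      (intervalIntegral_tendsto_integral hr ha hb)
  simpa [integral_cexp_phase_eq hp hg hr, Function.comp_def] using hsum

lemma integral_cexp_of_odd (hp : Continuous p) (hodd : Function.Odd p) (R : ℝ) :
    ∫ x in (-R)..R, Complex.exp (p x * Complex.I) =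
      ((2 * ∫ x in (0 : ℝ)..R, Real.cos (p x) : ℝ) : ℂ) := by
  have hcont : Continuous fun x ↦ Complex.exp (p x * Complex.I) := by fun_prop
  have hcont_neg : Continuous fun x ↦ Complex.exp (p (-x) * Complex.I) := by fun_prop
  have hreflect : ∫ x in (-R)..0, Complex.exp (p x * Complex.I) =
      ∫ x in (0 : ℝ)..R, Complex.exp (p (-x) * Complex.I) := by
    rw [intervalIntegral.integral_comp_neg fun x ↦ Complex.exp (p x * Complex.I), neg_zero]
  rw [← intervalIntegral.integral_add_adjacent_intervals (hcont.intervalIntegrable (-R) 0)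
      (hcont.intervalIntegrable 0 R), hreflect,
    ← intervalIntegral.integral_add (hcont_neg.intervalIntegrable 0 R)
      (hcont.intervalIntegrable 0 R),
    ← intervalIntegral.integral_const_mul, ← intervalIntegral.integral_ofReal]
  refine intervalIntegral.integral_congr fun x _ ↦ ?_
  simp only [hodd x, Complex.ofReal_neg, Complex.ofReal_mul, Complex.ofReal_ofNat,
    Complex.ofReal_cos, Complex.two_cos]
  exact add_comm _ _

end OscillatoryIntegral

section Airy

/-- The phase `ξ³/3 + ξz` of the Airy integral. -/
noncomputable def airyPhase (z ξ : ℝ) : ℝ := ξ ^ 3 / 3 + ξ * z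

/-- The weight `1 / (1 + ξ²)` used to integrate the Airy integral by parts. It does not depend on
`z`, which is what keeps the resulting bounds linear in `z`. -/
noncomputable def airyWeight (ξ : ℝ) : ℝ := (1 + ξ ^ 2)⁻¹

/-- The truncated Airy integral `(1/2π) ∫_{-R}^{R} e^{i(ξ³/3 + ξz)} dξ`. -/
noncomputable def truncAiry (R z : ℝ) : ℂ :=
  (2 * π : ℂ)⁻¹ * ∫ ξ in (-R)..R, Complex.exp (airyPhase z ξ * Complex.I)

lemma odd_airyPhase (z : ℝ) : Function.Odd (airyPhase z) := fun ξ ↦ by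
  unfold airyPhase
  ring

lemma hasDerivAt_airyPhase (z ξ : ℝ) : HasDerivAt (airyPhase z) (ξ ^ 2 + z) ξ := by
  refine (((hasDerivAt_pow 3 ξ).div_const 3).add ((hasDerivAt_id ξ).mul_const z)).congr_deriv ?_
  norm_num

lemma differentiable_airyPhase (z : ℝ) : Differentiable ℝ (airyPhase z) := fun ξ ↦
  (hasDerivAt_airyPhase z ξ).differentiableAt

lemma hasDerivAt_airyWeight (ξ : ℝ) :
    HasDerivAt airyWeight (-(2 * ξ) / (1 + ξ ^ 2) ^ 2) ξ := by
  refine (((hasDerivAt_pow 2 ξ).const_add 1).fun_inv (by positivity)).congr_deriv ?_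
  norm_num

lemma differentiable_airyWeight : Differentiable ℝ airyWeight := fun ξ ↦
  (hasDerivAt_airyWeight ξ).differentiableAt

lemma tendsto_airyWeight_cocompact : Tendsto airyWeight (cocompact ℝ) (𝓝 0) := by
  have hsq : Tendsto (fun ξ : ℝ ↦ ξ ^ 2) (cocompact ℝ) atTop :=
    ((tendsto_pow_atTop two_ne_zero).comp tendsto_norm_cocompact_atTop).congr sq_abs
  exact tendsto_inv_atTop_zero.comp (tendsto_atTop_add_const_left _ _ hsq)

lemma abs_airyWeight_le_one (ξ : ℝ) : |airyWeight ξ| ≤ 1 := by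
  rw [airyWeight, abs_of_pos (by positivity)]
  exact inv_le_one_of_one_le₀ (by nlinarith [sq_nonneg ξ])

lemma norm_phaseRemainder_airy_le (z ξ : ℝ) :
    ‖phaseRemainder (airyPhase z) airyWeight ξ‖ ≤ (2 + |z|) * (1 + ξ ^ 2)⁻¹ := by
  have hpos : 0 < 1 + ξ ^ 2 := by positivity
  have hdefect : 1 - airyWeight ξ * (ξ ^ 2 + z) = (1 - z) * (1 + ξ ^ 2)⁻¹ := by
    rw [airyWeight]
    field_simp
    ring
  have hderiv : |-(2 * ξ) / (1 + ξ ^ 2) ^ 2| ≤ (1 + ξ ^ 2)⁻¹ := by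
    have h2ξ : |2 * ξ| ≤ 1 + ξ ^ 2 :=
      abs_le.2 ⟨by nlinarith [sq_nonneg (ξ + 1)], by nlinarith [sq_nonneg (ξ - 1)]⟩
    rw [abs_div, abs_neg, abs_of_pos (pow_pos hpos 2), div_le_iff₀ (pow_pos hpos 2)]
    field_simp
    exact h2ξ
  calc ‖phaseRemainder (airyPhase z) airyWeight ξ‖
      ≤ |1 - airyWeight ξ * (ξ ^ 2 + z)| + |-(2 * ξ) / (1 + ξ ^ 2) ^ 2| := by
        rw [← (hasDerivAt_airyPhase z ξ).deriv, ← (hasDerivAt_airyWeight ξ).deriv]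
        exact norm_phaseRemainder_le _ _ ξ
    _ ≤ (1 + |z|) * (1 + ξ ^ 2)⁻¹ + (1 + ξ ^ 2)⁻¹ := by
        rw [hdefect, abs_mul, abs_of_pos (inv_pos.2 hpos)]
        gcongr
        simpa using abs_sub 1 z
    _ = (2 + |z|) * (1 + ξ ^ 2)⁻¹ := by ring

lemma integrable_phaseRemainder_airy (z : ℝ) :
    Integrable (phaseRemainder (airyPhase z) airyWeight) :=
  (integrable_inv_one_add_sq.const_mul (2 + |z|)).mono'
    (measurable_phaseRemainder (differentiable_airyPhase z).continuous.measurable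
      differentiable_airyWeight.continuous.measurable).aestronglyMeasurable
    (ae_of_all _ (norm_phaseRemainder_airy_le z))

lemma norm_truncAiry_le (R z : ℝ) : ‖truncAiry R z‖ ≤ 2 + |z| := by
  have hremainder : ∫ ξ, ‖phaseRemainder (airyPhase z) airyWeight ξ‖ ≤ (2 + |z|) * π := by
    rw [← integral_univ_inv_one_add_sq, ← integral_const_mul]
    exact integral_mono (integrable_phaseRemainder_airy z).norm
      (integrable_inv_one_add_sq.const_mul _) (norm_phaseRemainder_airy_le z)
  have hintegral : ‖∫ ξ in (-R)..R, Complex.exp (airyPhase z ξ * Complex.I)‖ ≤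
      1 + 1 + (2 + |z|) * π :=
    (norm_integral_cexp_phase_le (differentiable_airyPhase z) differentiable_airyWeight
      (integrable_phaseRemainder_airy z) (-R) R).trans
      (add_le_add (add_le_add (abs_airyWeight_le_one _) (abs_airyWeight_le_one _)) hremainder)
  have hconst : ‖(2 * π : ℂ)⁻¹‖ = (2 * π)⁻¹ := by
    rw [norm_inv, norm_mul, Complex.norm_ofNat, Complex.norm_real, norm_of_nonneg pi_nonneg]
  rw [truncAiry, norm_mul, hconst, inv_mul_le_iff₀ two_pi_pos]
  nlinarith [pi_gt_three, abs_nonneg z]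

lemma ofReal_truncated_cos_integral_eq_truncAiry (R z : ℝ) :
    (((1 / π) * ∫ ξ in (0 : ℝ)..R, Real.cos (ξ ^ 3 / 3 + ξ * z) : ℝ) : ℂ) = truncAiry R z := by
  rw [truncAiry, integral_cexp_of_odd (differentiable_airyPhase z).continuous (odd_airyPhase z)]
  simp only [airyPhase]
  push_cast
  field_simp

lemma tendsto_truncAiry (z : ℝ) : Tendsto (fun R ↦ truncAiry R z) atTop (𝓝 (Ai z)) := by
  have hcomplex := (tendsto_integral_cexp_phase (differentiable_airyPhase z)
    differentiable_airyWeight (integrable_phaseRemainder_airy z) tendsto_airyWeight_cocompact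
    tendsto_neg_atTop_atBot tendsto_id).const_mul (2 * π : ℂ)⁻¹
  have hreal := (Complex.continuous_re.tendsto _).comp hcomplex
  have hAi : Tendsto (fun R : ℝ ↦ (1 / π) * ∫ ξ in (0 : ℝ)..R, Real.cos (ξ ^ 3 / 3 + ξ * z))
      atTop (𝓝 (Ai z)) :=
    tendsto_nhds_limUnder ⟨_, hreal.congr fun R ↦
      congr_arg Complex.re (ofReal_truncated_cos_integral_eq_truncAiry R z).symm⟩
  exact ((Complex.continuous_ofReal.tendsto _).comp hAi).congr fun R ↦
    ofReal_truncated_cos_integral_eq_truncAiry R z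

end Airy

section TruncatedInversion

variable {E : Type*} [NormedAddCommGroup E] [NormedSpace ℂ E]

/-- The inverse Fourier integral of `f` truncated to the frequencies `[-R, R]`. It makes sense for
locally integrable `f`, in particular for Fourier multipliers. -/
noncomputable def truncFourierInv (R : ℝ) (f : ℝ → E) (x : ℝ) : E :=
  ∫ w in (-R)..R, 𝐞 (w * x) • f w

lemma tendsto_truncFourierInv {f : ℝ → E} (hf : Integrable f) (x : ℝ) :
    Tendsto (fun R ↦ truncFourierInv R f x) atTop (𝓝 (𝓕⁻ f x)) := by
  have hint : Integrable fun w ↦ 𝐞 (w * x) • f w := by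
    simpa [mul_comm] using (fourierIntegral_convergent_iff (-x)).2 hf
  have hinv : 𝓕⁻ f x = ∫ w, 𝐞 (w * x) • f w := by
    simp [fourierInv_eq, mul_comm]
  rw [hinv]
  exact intervalIntegral_tendsto_integral hint tendsto_neg_atTop_atBot tendsto_id

lemma continuous_truncFourierInv {R : ℝ} {f : ℝ → E}
    (hf : IntervalIntegrable f volume (-R) R) : Continuous (truncFourierInv R f) := by
  refine intervalIntegral.continuous_of_dominated_interval (bound := fun w ↦ ‖f w‖) (fun x ↦ ?_)
    (fun x ↦ ae_of_all _ fun w _ ↦ (Circle.norm_smul _ _).le) hf.norm (ae_of_all _ fun w _ ↦ ?_)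
  · have hchar : Continuous fun w ↦ 𝐞 (w * x) := continuous_fourierChar.comp (by fun_prop)
    exact hchar.aestronglyMeasurable.smul hf.def'.aestronglyMeasurable
  · have hchar : Continuous fun x ↦ 𝐞 (w * x) := continuous_fourierChar.comp (by fun_prop)
    exact hchar.smul continuous_const

variable [CompleteSpace E]

lemma integral_truncFourierInv_smul {R : ℝ} {m : ℝ → ℂ} {f : ℝ → E}
    (hm : IntervalIntegrable m volume (-R) R) (hf : Integrable f) (x : ℝ) :
    ∫ y, truncFourierInv R m (x - y) • f y = truncFourierInv R (fun w ↦ m w • 𝓕 f w) x := by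
  have hintegrable : Integrable (Function.uncurry fun w y ↦ (𝐞 (w * (x - y)) • m w) • f y)
      ((volume.restrict (uIoc (-R) R)).prod volume) := by
    have hchar : Continuous fun q : ℝ × ℝ ↦ 𝐞 (q.1 * (x - q.2)) :=
      continuous_fourierChar.comp (by fun_prop)
    have hprod := hm.def'.smul_prod hf
    refine (hprod.mono (hchar.aestronglyMeasurable.smul hprod.aestronglyMeasurable)
      (ae_of_all _ fun q ↦ (Circle.norm_smul _ _).le)).congr (ae_of_all _ fun q ↦ ?_)
    exact (smul_assoc _ _ _).symm
  have hfrequency (w : ℝ) :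
      ∫ y, (𝐞 (w * (x - y)) • m w) • f y = 𝐞 (w * x) • m w • 𝓕 f w := by
    have hchar (y : ℝ) : 𝐞 (w * (x - y)) = 𝐞 (w * x) * 𝐞 (-(y * w)) := by
      rw [← AddChar.map_add_eq_mul, mul_sub, sub_eq_add_neg, mul_comm y]
    rw [fourier_real_eq, ← integral_smul, Circle.smul_def, ← integral_smul]
    congr 1 with y
    simp only [hchar, Circle.smul_def, Circle.coe_mul, smul_smul, smul_eq_mul]
    congr 1
    ring
  simp_rw [truncFourierInv, ← intervalIntegral.integral_smul_const]
  rw [← intervalIntegral_integral_swap hintegrable]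
  simp_rw [hfrequency]

theorem integral_kernel_smul_eq_fourierInv {m K : ℝ → ℂ} {f : ℝ → E} {B : ℝ → ℝ} {x : ℝ}
    (hm : LocallyIntegrable m) (hf : Integrable f) (hmf : Integrable fun w ↦ m w • 𝓕 f w)
    (hK : ∀ z, Tendsto (fun R ↦ truncFourierInv R m z) atTop (𝓝 (K z)))
    (hB : ∀ R z, ‖truncFourierInv R m z‖ ≤ B z)
    (hBf : Integrable fun y ↦ B (x - y) * ‖f y‖) :
    ∫ y, K (x - y) • f y = 𝓕⁻ (fun w ↦ m w • 𝓕 f w) x := by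
  have hmR (R : ℝ) : IntervalIntegrable m volume (-R) R :=
    (hm.integrableOn_isCompact isCompact_uIcc).intervalIntegrable
  have hkernel : Tendsto (fun R ↦ ∫ y, truncFourierInv R m (x - y) • f y) atTop
      (𝓝 (∫ y, K (x - y) • f y)) := by
    refine tendsto_integral_filter_of_dominated_convergence (fun y ↦ B (x - y) * ‖f y‖)
      (Eventually.of_forall fun R ↦ ?_) (Eventually.of_forall fun R ↦ ae_of_all _ fun y ↦ ?_) hBf
      (ae_of_all _ fun y ↦ (hK _).smul_const _)
    · exact ((continuous_truncFourierInv (hmR R)).comp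
        (continuous_const.sub continuous_id)).aestronglyMeasurable.smul hf.aestronglyMeasurable
    · rw [norm_smul]
      gcongr
      exact hB R _
  simp_rw [integral_truncFourierInv_smul (hmR _) hf] at hkernel
  exact tendsto_nhds_unique hkernel (tendsto_truncFourierInv hmf x)

end TruncatedInversion

section FourierMultiplier

variable {V E : Type*} [NormedAddCommGroup V] [InnerProductSpace ℝ V] [FiniteDimensional ℝ V]
  [MeasurableSpace V] [BorelSpace V] [NormedAddCommGroup E]

lemma coe_fourierMultiplierCLM [NormedSpace ℂ E] {m : V → ℂ} (hm : m.HasTemperateGrowth)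
    (φ : 𝓢(V, E)) :
    ⇑(SchwartzMap.fourierMultiplierCLM E m φ) = 𝓕⁻ (fun w ↦ m w • 𝓕 (φ : V → E) w) := by
  rw [SchwartzMap.fourierMultiplierCLM_apply, SchwartzMap.fourierInv_coe]
  congr 1 with w
  rw [SchwartzMap.smulLeftCLM_apply_apply hm, SchwartzMap.fourier_coe]

lemma fourier_fourierMultiplierCLM_apply [NormedSpace ℂ E] [CompleteSpace E] {m : V → ℂ}
    (hm : m.HasTemperateGrowth) (φ : 𝓢(V, E)) (w : V) :
    𝓕 (SchwartzMap.fourierMultiplierCLM E m φ) w = m w • 𝓕 φ w := by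
  rw [SchwartzMap.fourierMultiplierCLM_apply, FourierTransform.fourier_fourierInv_eq,
    SchwartzMap.smulLeftCLM_apply_apply hm]

lemma eLpNorm_fourier_schwartz [InnerProductSpace ℂ E] [CompleteSpace E] (φ : 𝓢(V, E)) :
    eLpNorm (𝓕 φ : 𝓢(V, E)) 2 = eLpNorm φ 2 := by
  have h := SchwartzMap.norm_fourier_toL2_eq φ
  rw [SchwartzMap.norm_toLp, SchwartzMap.norm_toLp] at h
  exact (ENNReal.toReal_eq_toReal_iff' ((𝓕 φ : 𝓢(V, E)).memLp 2 volume).eLpNorm_ne_top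
    (φ.memLp 2 volume).eLpNorm_ne_top).1 h

theorem eLpNorm_fourierMultiplierCLM_of_norm_eq_one [InnerProductSpace ℂ E] [CompleteSpace E]
    {m : V → ℂ} (hm : m.HasTemperateGrowth) (hm₁ : ∀ w, ‖m w‖ = 1) (φ : 𝓢(V, E)) :
    eLpNorm (SchwartzMap.fourierMultiplierCLM E m φ) 2 = eLpNorm φ 2 := by
  rw [← eLpNorm_fourier_schwartz, ← eLpNorm_fourier_schwartz φ]
  refine eLpNorm_congr_norm_ae (ae_of_all _ fun w ↦ ?_)
  rw [fourier_fourierMultiplierCLM_apply hm, norm_smul, hm₁, one_mul]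

end FourierMultiplier

section CubicPhase

lemma iteratedDeriv_cexp_ofReal_mul_I (n : ℕ) :
    iteratedDeriv n (fun x : ℝ ↦ Complex.exp (x * Complex.I)) =
      fun x : ℝ ↦ Complex.I ^ n * Complex.exp (x * Complex.I) := by
  induction n with
  | zero => simp
  | succ n ih =>
    funext x
    have hexp := (((hasDerivAt_id x).ofReal_comp.mul_const Complex.I).cexp).const_mul
      (Complex.I ^ n)
    rw [iteratedDeriv_succ, ih]
    rw [pow_succ, mul_right_comm, mul_assoc]
    exact hexp.deriv.trans (by simp)

lemma hasTemperateGrowth_cexp_ofReal_mul_I {V : Type*} [NormedAddCommGroup V] [NormedSpace ℝ V]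
    {p : V → ℝ} (hp : p.HasTemperateGrowth) :
    Function.HasTemperateGrowth fun x ↦ Complex.exp (p x * Complex.I) := by
  have hexp : Function.HasTemperateGrowth fun x : ℝ ↦ Complex.exp (x * Complex.I) := by
    refine ⟨(Complex.ofRealCLM.contDiff.mul contDiff_const).cexp, fun n ↦ ⟨0, 1, fun x ↦ ?_⟩⟩
    rw [norm_iteratedFDeriv_eq_norm_iteratedDeriv, iteratedDeriv_cexp_ofReal_mul_I]
    simp [Complex.norm_exp_ofReal_mul_I]
  exact hexp.comp hp

/-- The multiplier `e^{it(2πw)³/3}` of the Airy group. Mathlib's Fourier transform is normalized by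
`e^{-2πiwx}`, so that `w` corresponds to the frequency `ξ = 2πw`. -/
noncomputable def airyMultiplier (t w : ℝ) : ℂ :=
  Complex.exp ((t * (2 * π * w) ^ 3 / 3 : ℝ) * Complex.I)

lemma norm_airyMultiplier (t w : ℝ) : ‖airyMultiplier t w‖ = 1 :=
  Complex.norm_exp_ofReal_mul_I _

lemma hasTemperateGrowth_airyMultiplier (t : ℝ) : (airyMultiplier t).HasTemperateGrowth := by
  refine hasTemperateGrowth_cexp_ofReal_mul_I (p := fun w ↦ t * (2 * π * w) ^ 3 / 3) ?_
  simp only [div_eq_mul_inv]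
  fun_prop

lemma truncFourierInv_airyMultiplier {t : ℝ} (ht : 0 < t) (R x : ℝ) :
    truncFourierInv R (airyMultiplier t) x =
      ((t ^ (1/3 : ℝ))⁻¹ : ℝ) *
        truncAiry (2 * π * t ^ (1/3 : ℝ) * R) (x / t ^ (1/3 : ℝ)) := by
  have hs : 0 < t ^ (1/3 : ℝ) := by positivity
  have hs₃ : (t ^ (1/3 : ℝ)) ^ 3 = t := by
    rw [← Real.rpow_natCast, ← Real.rpow_mul ht.le]
    norm_num
  generalize t ^ (1/3 : ℝ) = s at hs hs₃ ⊢
  have hphase (w : ℝ) : 𝐞 (w * x) • airyMultiplier t w =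
      Complex.exp (airyPhase (x / s) (2 * π * s * w) * Complex.I) := by
    rw [Circle.smul_def, fourierChar_apply, airyMultiplier, smul_eq_mul, ← Complex.exp_add,
      ← add_mul, ← Complex.ofReal_add]
    congr 3
    rw [airyPhase, ← hs₃]
    field_simp
    ring
  have hscale := intervalIntegral.integral_comp_mul_left (a := -R) (b := R)
    (fun ξ ↦ Complex.exp (airyPhase (x / s) ξ * Complex.I)) (c := 2 * π * s) (by positivity)
  simp_rw [truncFourierInv, hphase]
  rw [hscale, truncAiry, mul_neg, Complex.real_smul, ← mul_assoc]
  push_cast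
  rw [mul_inv, mul_comm (s : ℂ)⁻¹]

lemma tendsto_truncFourierInv_airyMultiplier {t : ℝ} (ht : 0 < t) (x : ℝ) :
    Tendsto (fun R ↦ truncFourierInv R (airyMultiplier t) x) atTop
      (𝓝 (((t ^ (1/3 : ℝ))⁻¹ : ℝ) * Ai (x / t ^ (1/3 : ℝ)))) := by
  have hscale : Tendsto (fun R ↦ 2 * π * t ^ (1/3 : ℝ) * R) atTop atTop :=
    tendsto_id.const_mul_atTop (by positivity)
  simp_rw [truncFourierInv_airyMultiplier ht]
  exact ((tendsto_truncAiry _).comp hscale).const_mul _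

lemma norm_truncFourierInv_airyMultiplier_le {t : ℝ} (ht : 0 < t) (R x : ℝ) :
    ‖truncFourierInv R (airyMultiplier t) x‖ ≤
      (t ^ (1/3 : ℝ))⁻¹ * (2 + (t ^ (1/3 : ℝ))⁻¹ * ‖x‖) := by
  have hs : 0 < t ^ (1/3 : ℝ) := by positivity
  rw [truncFourierInv_airyMultiplier ht, norm_mul, Complex.norm_real,
    norm_of_nonneg (inv_pos.2 hs).le]
  gcongr
  refine (norm_truncAiry_le _ _).trans_eq ?_
  rw [abs_div, abs_of_pos hs, div_eq_inv_mul, Real.norm_eq_abs]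

end CubicPhase

lemma integrable_affine_norm_sub_mul {V E : Type*} [NormedAddCommGroup V] [MeasurableSpace V]
    [OpensMeasurableSpace V] [NormedAddCommGroup E] {μ : Measure V} {f : V → E}
    (hf : Integrable f μ) (hf₁ : Integrable (fun y ↦ ‖y‖ * ‖f y‖) μ) (a b : ℝ) (x : V) :
    Integrable (fun y ↦ (a + b * ‖x - y‖) * ‖f y‖) μ := by
  have hsub : Integrable (fun y ↦ ‖x - y‖ * ‖f y‖) μ := by
    refine ((hf.norm.const_mul ‖x‖).add hf₁).mono' ?_ (ae_of_all _ fun y ↦ ?_)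
    · exact (continuous_const.sub continuous_id).norm.aestronglyMeasurable.mul
        hf.norm.aestronglyMeasurable
    · rw [Pi.add_apply, ← add_mul, norm_mul, norm_norm, norm_norm]
      gcongr
      exact norm_sub_le x y
  simpa only [add_mul, mul_assoc, Pi.add_def] using! (hf.norm.const_mul a).add (hsub.const_mul b)

theorem U_eq_fourierMultiplierCLM {t : ℝ} (ht : 0 < t) (φ : 𝓢(ℝ, ℂ)) :
    U t φ = SchwartzMap.fourierMultiplierCLM ℂ (airyMultiplier t) φ := by
  have hm := hasTemperateGrowth_airyMultiplier t
  have hmφ : Integrable fun w ↦ airyMultiplier t w • 𝓕 (φ : ℝ → ℂ) w := by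
    refine (SchwartzMap.smulLeftCLM ℂ (airyMultiplier t) (𝓕 φ)).integrable.congr
      (ae_of_all _ fun w ↦ ?_)
    rw [SchwartzMap.smulLeftCLM_apply_apply hm, SchwartzMap.fourier_coe]
  have hφ₁ : Integrable fun y : ℝ ↦ ‖y‖ * ‖φ y‖ := by
    simpa using φ.integrable_pow_mul volume 1
  funext x
  rw [coe_fourierMultiplierCLM hm, ← integral_kernel_smul_eq_fourierInv
    hm.1.continuous.locallyIntegrable φ.integrable hmφ
    (tendsto_truncFourierInv_airyMultiplier ht) (norm_truncFourierInv_airyMultiplier_le ht)]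
  · rw [U, ← integral_smul]
    simp only [Complex.real_smul, smul_eq_mul, mul_assoc]
  · simp only [mul_add, ← mul_assoc]
    exact integrable_affine_norm_sub_mul φ.integrable hφ₁ _ _ x

lemma FT_eq_fourier (f : ℝ → ℂ) (ξ : ℝ) : FT f ξ = 𝓕 f (ξ / (2 * π)) := by
  rw [FT, fourier_real_eq_integral_exp_smul]
  congr 1 with x
  rw [smul_eq_mul]
  congr 2
  push_cast
  field_simp

lemma airyMultiplier_div_two_pi (t ξ : ℝ) :
    airyMultiplier t (ξ / (2 * π)) = Complex.exp (Complex.I * t * ξ ^ 3 / 3) := by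
  rw [airyMultiplier, mul_div_cancel₀ ξ two_pi_pos.ne']
  congr 1
  push_cast
  ring

/-- For `t > 0` and Schwartz `φ`, `(U t φ)^(ξ) = e^{itξ³/3} φ̂(ξ)`; consequently `U t`
preserves the `L²` norm (hence extends to an isometry of `L²`). -/
theorem kdv_fourier_multiplier (t : ℝ) (ht : 0 < t) (φ : SchwartzMap ℝ ℂ) :
    (∀ ξ : ℝ, FT (U t (⇑φ)) ξ = Complex.exp (Complex.I * t * ξ ^ 3 / 3) * FT (⇑φ) ξ) ∧
    eLpNorm (U t (⇑φ)) 2 (volume : Measure ℝ) = eLpNorm (⇑φ) 2 (volume : Measure ℝ) := by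
  have hm := hasTemperateGrowth_airyMultiplier t
  rw [U_eq_fourierMultiplierCLM ht φ]
  refine ⟨fun ξ ↦ ?_, eLpNorm_fourierMultiplierCLM_of_norm_eq_one hm (norm_airyMultiplier t) φ⟩
  rw [FT_eq_fourier, FT_eq_fourier, ← SchwartzMap.fourier_coe, ← SchwartzMap.fourier_coe,
    fourier_fourierMultiplierCLM_apply hm, smul_eq_mul, airyMultiplier_div_two_pi]
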